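/- Let p = (p₁₀ + p₁₁·z)·u + p₂₁·z·u² and p′ = (p′₁₀ + p′₁₁·z)·u + p′₂₁·z·u² with p₁₀, p₁₁, p₂₁, p′₁₀, p′₁₁, p′₂₁ ∈ ℂ, and suppose (p₁₀, p₁₁) ≠ (0, 0). Then E_p ≅ E_{p′} if and only if there exists λ ∈ ℂ, λ ≠ 0, with p′₁₀ = λ·p₁₀ and p′₁₁ = λ·p₁₁ (with no condition relating p₂₁ and p′₂₁). -/

import Mathlib

set_option synthInstance.maxHeartbeats 1000000
set_option maxHeartbeats 1000000

noncomputable section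

/-- The ring of Laurent polynomials `ℂ[z,z⁻¹]`. -/
abbrev Lz : Type := LaurentPolynomial ℂ

/-- The ring `P = ℂ[z,z⁻¹][[u]]` of formal power series in `u` with Laurent
polynomial coefficients. -/
abbrev Pz : Type := PowerSeries Lz

/-- The monomial `z^l u^i` as an element of `P`. -/
def mon (l : ℤ) (i : ℕ) : Pz := PowerSeries.monomial (R := Lz) i (LaurentPolynomial.T l)

/-- The ideal `(u^{n+1})` of `P`. -/
def In (n : ℕ) : Ideal Pz := Ideal.span {(PowerSeries.X : Pz) ^ (n + 1)}

/-- The ring `A = ℂ[z,z⁻¹][u]/(u^{n+1})`, the coordinate ring of the overlap of the two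
standard charts of the `n`-th infinitesimal neighborhood `Z_k^{(n)}`. -/
abbrev Aq (n : ℕ) : Type := Pz ⧸ In n

/-- The quotient map `P → A`. -/
def toA (n : ℕ) : Pz →+* Aq n := Ideal.Quotient.mk (In n)

/-- The monomial `z^l u^i` as an element of `A`. -/
def monA (n : ℕ) (l : ℤ) (i : ℕ) : Aq n := toA n (mon l i)

/-- `O_U ⊆ A`: the `ℂ`-span of the monomials `z^l u^i` with `l ≥ 0`, `0 ≤ i ≤ n`. -/
def OU (n : ℕ) : Submodule ℂ (Aq n) :=
  Submodule.span ℂ {x | ∃ l : ℤ, ∃ i : ℕ, 0 ≤ l ∧ i ≤ n ∧ x = monA n l i}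

/-- `O_V ⊆ A`: the `ℂ`-span of the monomials `z^l u^i` with `l ≤ k·i`, `0 ≤ i ≤ n`. -/
def OV (k n : ℕ) : Submodule ℂ (Aq n) :=
  Submodule.span ℂ {x | ∃ l : ℤ, ∃ i : ℕ, l ≤ k * i ∧ i ≤ n ∧ x = monA n l i}

/-- The submodule `a·S` obtained from a submodule `S` by multiplying by a fixed element `a`. -/
def msmul {n : ℕ} (a : Aq n) (S : Submodule ℂ (Aq n)) : Submodule ℂ (Aq n) :=
  Submodule.map (LinearMap.mulLeft ℂ a) S

/-- The transition matrix `M_p = ((z^j, p),(0, z^{−j}))` of the bundle `E_p`. -/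
def Mmat (n : ℕ) (j : ℤ) (p : Aq n) : Matrix (Fin 2) (Fin 2) (Aq n) :=
  !![monA n j 0, p; 0, monA n (-j) 0]

/-- `E_p ≅ E_{p′}`: there are matrices `A₁` with entries in `O_U` and `B₁` with entries
in `O_V`, with `det A₁` a unit of `O_U` and `det B₁` a unit of `O_V`, with
`B₁ · M_p = M_{p′} · A₁`. -/
def BundleIso (k n : ℕ) (j : ℤ) (p p' : Aq n) : Prop :=
  ∃ A₁ B₁ : Matrix (Fin 2) (Fin 2) (Aq n),
    (∀ a b : Fin 2, A₁ a b ∈ OU n) ∧ (∀ a b : Fin 2, B₁ a b ∈ OV k n) ∧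
    (∃ w ∈ OU n, A₁.det * w = 1) ∧ (∃ w ∈ OV k n, B₁.det * w = 1) ∧
    B₁ * Mmat n j p = Mmat n j p' * A₁

/-!
Compare the two sides of `B₁ · M_p = M_{p'} · A₁` power by power in `u`. At order zero the diagonal
entries of `A₁` and `B₁` glue to global functions on `ℙ¹`, i.e. constants `a` and `d`, nonzero
because the determinant is a unit, while the upper right entry glues to a section of the negative
bundle `O(-2j)` and so vanishes. At order one, writing `p₁` and `p'₁` for the coefficients of `u`,
the upper right entry says that `a p₁ - d p'₁` lies in `z^j ℂ[z] + z^(k-j) ℂ[z⁻¹]`; no monomial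
`z^l` with `k - j < l < j` occurs there, so in this range `p'₁` and `(a / d) p₁` have the same
coefficients.

Conversely, after scaling by `λ` the `u²` coefficient can be adjusted freely: multiplying `p` by the
unit `λ + s u + t z u`, regular on both charts, changes the coefficient of `z u²` by
`t p₁₀ + s p₁₁`, which takes every value since `(p₁₀, p₁₁) ≠ (0, 0)`, and the other new terms
`s p₁₀ u²` and `t p₁₁ z² u²` are absorbed by the upper right entries of `B₁` and `A₁`.
-/

theorem exists_mem_mul_eq_one_of_isNilpotent {R A : Type*} [CommRing R] [CommRing A]
    [Algebra R A] (S : Subalgebra R A) {c : R} (hc : IsUnit c) {x : A} (hx : IsNilpotent x)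
    (hxS : x ∈ S) :
    ∃ w ∈ S, (algebraMap R A c + x) * w = 1 := by
  have hxS' : IsNilpotent (⟨x, hxS⟩ : S) :=
    (IsNilpotent.map_iff (f := S.val) Subtype.val_injective).mp hx
  have hunit : IsUnit (algebraMap R S c + ⟨x, hxS⟩) :=
    hxS'.isUnit_add_left_of_commute (hc.map _) (Commute.all _ _)
  obtain ⟨w, hw⟩ := hunit.exists_right_inv
  exact ⟨w, w.2, congrArg Subtype.val hw⟩

section LaurentCoefficients

open LaurentPolynomial

variable {R : Type*} [Semiring R]

theorem coeff_mul_T (f : R[T;T⁻¹]) (m l : ℤ) : (f * T m).coeff l = f.coeff (l - m) := by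
  rw [T, AddMonoidAlgebra.coeff_mul_single_apply, mul_one, sub_eq_add_neg]

theorem coeff_C_mul (a : R) (f : R[T;T⁻¹]) (l : ℤ) : (C a * f).coeff l = a * f.coeff l := by
  rw [← smul_eq_C_mul, AddMonoidAlgebra.coeff_smul, Finsupp.smul_apply, smul_eq_mul]

theorem eq_C_coeff_zero {f : R[T;T⁻¹]} (hneg : ∀ l < 0, f.coeff l = 0)
    (hpos : ∀ l > 0, f.coeff l = 0) : f = C (f.coeff 0) := by
  ext l
  rw [C_apply]
  rcases lt_trichotomy l 0 with hl | rfl | hl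
  · rw [hneg l hl, if_neg hl.ne]
  · rw [if_pos rfl]
  · rw [hpos l hl, if_neg hl.ne']

end LaurentCoefficients

section Monomials

variable (n : ℕ)

theorem monA_zero_zero : monA n 0 0 = 1 := by
  simp [monA, mon]

theorem monA_mul_monA (l m : ℤ) (i j : ℕ) :
    monA n l i * monA n m j = monA n (l + m) (i + j) := by
  simp only [monA, mon, ← map_mul, PowerSeries.monomial_mul_monomial, LaurentPolynomial.T_add]

theorem monA_pow (l : ℤ) (i m : ℕ) : monA n l i ^ m = monA n (m * l) (m * i) := by
  induction m with
  | zero => simp [monA_zero_zero]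
  | succ m ih => rw [pow_succ, ih, monA_mul_monA]; push_cast; ring_nf

variable {n}

theorem monA_eq_zero_of_lt {i : ℕ} (hi : n < i) (l : ℤ) : monA n l i = 0 := by
  rw [monA, toA, Ideal.Quotient.eq_zero_iff_mem, In, Ideal.mem_span_singleton,
    PowerSeries.X_pow_dvd_iff]
  intro m hm
  rw [mon, PowerSeries.coeff_monomial, if_neg (by omega)]

theorem isNilpotent_monA {i : ℕ} (hi : 0 < i) (l : ℤ) : IsNilpotent (monA n l i) :=
  ⟨n + 1, by rw [monA_pow, monA_eq_zero_of_lt (by nlinarith)]⟩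

end Monomials

section Coefficients

variable {n i : ℕ}

/-- The coefficient of `u^i` of an element of `A = ℂ[z,z⁻¹][u]/(u^{n+1})`. It is defined through
truncation, which makes it total in `i`: it is zero for `n < i`. -/
def uCoeff (n i : ℕ) : Aq n →ₗ[ℂ] Lz :=
  ((In n).restrictScalars ℂ).liftQ
    ((Polynomial.lcoeff Lz i ∘ₗ PowerSeries.trunc (n + 1)).restrictScalars ℂ) <| by
      intro f hf
      obtain ⟨g, rfl⟩ := Ideal.mem_span_singleton.mp hf
      change (PowerSeries.trunc (n + 1) _).coeff i = 0
      rw [PowerSeries.trunc_X_pow_self_mul, Polynomial.coeff_zero]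

theorem uCoeff_toA (hi : i ≤ n) (f : Pz) : uCoeff n i (toA n f) = PowerSeries.coeff i f := by
  change (PowerSeries.trunc (n + 1) f).coeff i = _
  rw [PowerSeries.coeff_trunc, if_pos (by omega)]

theorem uCoeff_monA (hi : i ≤ n) (l : ℤ) (j : ℕ) :
    uCoeff n i (monA n l j) = if i = j then LaurentPolynomial.T l else 0 := by
  rw [monA, uCoeff_toA hi, mon, PowerSeries.coeff_monomial]

theorem uCoeff_mul (hi : i ≤ n) (x y : Aq n) :
    uCoeff n i (x * y) =
      ∑ ab ∈ Finset.HasAntidiagonal.antidiagonal i, uCoeff n ab.1 x * uCoeff n ab.2 y := by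
  obtain ⟨f, rfl⟩ : ∃ f, toA n f = x := Ideal.Quotient.mk_surjective x
  obtain ⟨g, rfl⟩ : ∃ g, toA n g = y := Ideal.Quotient.mk_surjective y
  rw [← map_mul, uCoeff_toA hi, PowerSeries.coeff_mul]
  refine Finset.sum_congr rfl fun ab hab => ?_
  have hsum := Finset.HasAntidiagonal.mem_antidiagonal.mp hab
  rw [uCoeff_toA (by omega), uCoeff_toA (by omega)]

theorem uCoeff_zero_mul (x y : Aq n) : uCoeff n 0 (x * y) = uCoeff n 0 x * uCoeff n 0 y := by
  simp [uCoeff_mul (Nat.zero_le n)]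

theorem uCoeff_one_mul (hn : 1 ≤ n) (x y : Aq n) :
    uCoeff n 1 (x * y) = uCoeff n 0 x * uCoeff n 1 y + uCoeff n 1 x * uCoeff n 0 y := by
  simp [uCoeff_mul hn, Finset.Nat.antidiagonal_succ]

theorem uCoeff_zero_one : uCoeff n 0 1 = 1 := by
  simp [← monA_zero_zero n, uCoeff_monA (Nat.zero_le n)]

end Coefficients

section Charts

/-- The subalgebra of `A` spanned by the monomials `z^l u^i` with `(l, i)` in a given submonoid of
exponents. Both chart rings `O_U` and `O_V` are of this form. -/
def monSubalgebra (n : ℕ) (S : AddSubmonoid (ℤ × ℕ)) : Subalgebra ℂ (Aq n) :=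
  (Submodule.span ℂ ((fun e : ℤ × ℕ => monA n e.1 e.2) '' S)).toSubalgebra
    (Submodule.subset_span ⟨0, S.zero_mem, monA_zero_zero n⟩) <| by
      intro x y hx hy
      have hxy := Submodule.mul_mem_mul hx hy
      rw [Submodule.span_mul_span] at hxy
      refine Submodule.span_mono ?_ hxy
      rintro _ ⟨_, ⟨e, he, rfl⟩, _, ⟨f, hf, rfl⟩, rfl⟩
      exact ⟨e + f, S.add_mem he hf, (monA_mul_monA n e.1 f.1 e.2 f.2).symm⟩

/-- The exponents `(l, i)` of the monomials `z^l u^i` that are regular on the chart `U`. -/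
def exponentsU : AddSubmonoid (ℤ × ℕ) where
  carrier := {e | 0 ≤ e.1}
  zero_mem' := le_refl (0 : ℤ)
  add_mem' he hf := add_nonneg (α := ℤ) he hf

/-- The exponents `(l, i)` of the monomials `z^l u^i` that are regular on the chart `V`. -/
def exponentsV (k : ℕ) : AddSubmonoid (ℤ × ℕ) where
  carrier := {e | e.1 ≤ k * e.2}
  zero_mem' := by simp
  add_mem' {e f} he hf := by
    simpa [mul_add] using add_le_add he hf

theorem mem_exponentsU {e : ℤ × ℕ} : e ∈ exponentsU ↔ 0 ≤ e.1 := Iff.rfl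

theorem mem_exponentsV {k : ℕ} {e : ℤ × ℕ} : e ∈ exponentsV k ↔ e.1 ≤ k * e.2 := Iff.rfl

variable {n k : ℕ} {S : AddSubmonoid (ℤ × ℕ)} {x y : Aq n}

theorem monA_mem_monSubalgebra {l : ℤ} {i : ℕ} (h : (l, i) ∈ S) :
    monA n l i ∈ monSubalgebra n S :=
  Submodule.subset_span ⟨(l, i), h, rfl⟩

theorem toSubmodule_monSubalgebra (n : ℕ) (S : AddSubmonoid (ℤ × ℕ)) :
    Subalgebra.toSubmodule (monSubalgebra n S) =
      Submodule.span ℂ {x | ∃ l : ℤ, ∃ i : ℕ, (l, i) ∈ S ∧ i ≤ n ∧ x = monA n l i} := by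
  apply le_antisymm <;> refine Submodule.span_le.mpr ?_
  · rintro _ ⟨⟨l, i⟩, he, rfl⟩
    by_cases hi : i ≤ n
    · exact Submodule.subset_span ⟨l, i, he, hi, rfl⟩
    · simp only [monA_eq_zero_of_lt (not_le.mp hi), SetLike.mem_coe, Submodule.zero_mem]
  · rintro _ ⟨l, i, he, -, rfl⟩
    exact monA_mem_monSubalgebra he

theorem mem_OU_iff : x ∈ OU n ↔ x ∈ monSubalgebra n exponentsU := by
  rw [← Subalgebra.mem_toSubmodule, toSubmodule_monSubalgebra, OU]
  rfl

theorem mem_OV_iff : x ∈ OV k n ↔ x ∈ monSubalgebra n (exponentsV k) := by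
  rw [← Subalgebra.mem_toSubmodule, toSubmodule_monSubalgebra, OV]
  rfl

theorem coeff_uCoeff_eq_zero_of_notMem {i : ℕ} {l : ℤ} (hx : x ∈ monSubalgebra n S) (hi : i ≤ n)
    (h : (l, i) ∉ S) : (uCoeff n i x).coeff l = 0 := by
  induction hx using Submodule.span_induction with
  | mem x hx =>
    obtain ⟨⟨m, j⟩, he, rfl⟩ := hx
    rw [uCoeff_monA hi]
    split_ifs with hij
    · have hml : m ≠ l := fun hml => h (hml ▸ hij ▸ he)
      rw [LaurentPolynomial.T_apply, if_neg hml]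
    · rfl
  | zero => simp
  | add x y _ _ hx hy => simp [hx, hy]
  | smul c x _ hx => simp [hx]

theorem coeff_uCoeff_eq_zero_of_mem_OU {i : ℕ} {l : ℤ} (hx : x ∈ OU n) (hi : i ≤ n)
    (hl : l < 0) : (uCoeff n i x).coeff l = 0 :=
  coeff_uCoeff_eq_zero_of_notMem (mem_OU_iff.mp hx) hi (mem_exponentsU.not.mpr hl.not_ge)

theorem coeff_uCoeff_eq_zero_of_mem_OV {i : ℕ} {l : ℤ} (hx : x ∈ OV k n) (hi : i ≤ n)
    (hl : k * i < l) : (uCoeff n i x).coeff l = 0 :=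
  coeff_uCoeff_eq_zero_of_notMem (mem_OV_iff.mp hx) hi (mem_exponentsV.not.mpr hl.not_ge)

theorem exists_uCoeff_zero_eq_C (hx : x ∈ OU n) (hy : y ∈ OV k n)
    (hxy : uCoeff n 0 x = uCoeff n 0 y) : ∃ c : ℂ, uCoeff n 0 x = LaurentPolynomial.C c :=
  ⟨_, eq_C_coeff_zero (fun _ hl => coeff_uCoeff_eq_zero_of_mem_OU hx n.zero_le hl) fun _ hl =>
    hxy ▸ coeff_uCoeff_eq_zero_of_mem_OV hy n.zero_le (by simpa using hl)⟩

theorem uCoeff_zero_eq_zero_of_mul_T_eq {m : ℤ} (hm : 0 < m) (hx : x ∈ OU n) (hy : y ∈ OV k n)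
    (hxy : uCoeff n 0 x * LaurentPolynomial.T m = uCoeff n 0 y) : uCoeff n 0 x = 0 := by
  ext l
  rcases lt_or_ge l 0 with hl | hl
  · exact coeff_uCoeff_eq_zero_of_mem_OU hx n.zero_le hl
  · have hy0 := coeff_uCoeff_eq_zero_of_mem_OV (l := l + m) hy n.zero_le (by push_cast; lia)
    rwa [← hxy, coeff_mul_T, add_sub_cancel_right] at hy0

end Charts

section BundleIso

open LaurentPolynomial

variable {n k : ℕ} {j : ℤ} {p p' : Aq n}

theorem BundleIso.exists_firstOrder_eq (hn : 1 ≤ n) (hj : 0 < j) (hp : uCoeff n 0 p = 0)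
    (hp' : uCoeff n 0 p' = 0) (h : BundleIso k n j p p') :
    ∃ a d : ℂ, a ≠ 0 ∧ d ≠ 0 ∧ ∃ b ∈ OU n, ∃ c ∈ OV k n,
      C a * uCoeff n 1 p + uCoeff n 1 c * T (-j) =
        uCoeff n 1 b * T j + C d * uCoeff n 1 p' := by
  obtain ⟨A, B, hA, hB, ⟨w, -, hdet⟩, -, hM⟩ := h
  have h00 : B 0 0 * monA n j 0 = monA n j 0 * A 0 0 + p' * A 1 0 := by
    simpa [Mmat, Matrix.mul_apply] using congr($hM 0 0)
  have h01 : B 0 0 * p + B 0 1 * monA n (-j) 0 = monA n j 0 * A 0 1 + p' * A 1 1 := by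
    simpa [Mmat, Matrix.mul_apply] using congr($hM 0 1)
  have h11 : B 1 0 * p + B 1 1 * monA n (-j) 0 = monA n (-j) 0 * A 1 1 := by
    simpa [Mmat, Matrix.mul_apply] using congr($hM 1 1)
  have hA00 : uCoeff n 0 (A 0 0) = uCoeff n 0 (B 0 0) := by
    apply (isUnit_T j).mul_right_cancel
    simpa [uCoeff_zero_mul, uCoeff_monA, hp'] using congr(uCoeff n 0 $h00).symm
  have hA11 : uCoeff n 0 (A 1 1) = uCoeff n 0 (B 1 1) := by
    apply (isUnit_T (-j)).mul_right_cancel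
    simpa [uCoeff_zero_mul, uCoeff_monA, hp] using congr(uCoeff n 0 $h11).symm
  have hA01 : uCoeff n 0 (A 0 1) = 0 := by
    refine uCoeff_zero_eq_zero_of_mul_T_eq (m := j + j) (by lia) (hA 0 1) (hB 0 1) ?_
    apply (isUnit_T (-j)).mul_right_cancel
    rw [mul_T_assoc, add_neg_cancel_right]
    simpa [uCoeff_zero_mul, uCoeff_monA, hp, hp'] using congr(uCoeff n 0 $h01).symm
  obtain ⟨a, ha⟩ := exists_uCoeff_zero_eq_C (hA 0 0) (hB 0 0) hA00
  obtain ⟨d, hd⟩ := exists_uCoeff_zero_eq_C (hA 1 1) (hB 1 1) hA11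
  have had : a * d ≠ 0 := by
    intro had
    have hdet0 := congr(uCoeff n 0 $hdet)
    simp [Matrix.det_fin_two, uCoeff_zero_mul, uCoeff_zero_one, hA01, ha, hd, ← map_mul, had]
      at hdet0
  refine ⟨a, d, left_ne_zero_of_mul had, right_ne_zero_of_mul had,
    A 0 1, hA 0 1, B 0 1, hB 0 1, ?_⟩
  have h01' := congr(uCoeff n 1 $h01)
  simp only [map_add, uCoeff_one_mul hn, uCoeff_monA hn, uCoeff_monA n.zero_le, hp, hp', ha, hd,
    ← hA00, one_ne_zero, if_true, if_false] at h01'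
  linear_combination h01'

theorem BundleIso.exists_coeff_uCoeff_one_eq_mul (hn : 1 ≤ n) (hj : 0 < j) (hp : uCoeff n 0 p = 0)
    (hp' : uCoeff n 0 p' = 0) (h : BundleIso k n j p p') :
    ∃ lam : ℂ, lam ≠ 0 ∧ ∀ l : ℤ, k - j < l → l < j →
      (uCoeff n 1 p').coeff l = lam * (uCoeff n 1 p).coeff l := by
  obtain ⟨a, d, ha, hd, b, hb, c, hc, hfirst⟩ := h.exists_firstOrder_eq hn hj hp hp'
  refine ⟨a / d, div_ne_zero ha hd, fun l hkl hlj => ?_⟩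
  have hb0 : (uCoeff n 1 b * T j).coeff l = 0 := by
    rw [coeff_mul_T, coeff_uCoeff_eq_zero_of_mem_OU hb hn (by lia)]
  have hc0 : (uCoeff n 1 c * T (-j)).coeff l = 0 := by
    rw [coeff_mul_T, coeff_uCoeff_eq_zero_of_mem_OV hc hn (by push_cast; lia)]
  have hl : a * (uCoeff n 1 p).coeff l = d * (uCoeff n 1 p').coeff l := by
    simpa [coeff_C_mul, hb0, hc0] using congr(($hfirst).coeff l)
  rw [div_mul_eq_mul_div, hl, mul_div_cancel_left₀ _ hd]

theorem BundleIso.of_upperTriangular {a b c : Aq n} (haU : a ∈ OU n) (haV : a ∈ OV k n)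
    (hwU : ∃ w ∈ OU n, a * w = 1) (hwV : ∃ w ∈ OV k n, a * w = 1) (hb : b ∈ OU n) (hc : c ∈ OV k n)
    (h : a * p + c * monA n (-j) 0 = monA n j 0 * b + p') : BundleIso k n j p p' := by
  have hU := mem_OU_iff.mpr (monSubalgebra n exponentsU).one_mem
  have hV := mem_OV_iff.mpr (monSubalgebra n (exponentsV k)).one_mem
  refine ⟨!![a, b; 0, 1], !![a, c; 0, 1], ?_, ?_, ?_, ?_, ?_⟩
  · simp [Fin.forall_fin_two, haU, hb, hU]
  · simp [Fin.forall_fin_two, haV, hc, hV]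
  · simpa [Matrix.det_fin_two] using hwU
  · simpa [Matrix.det_fin_two] using hwV
  · simp only [Mmat, Matrix.mul_fin_two, h]
    simp [mul_comm]

end BundleIso

theorem bundleIso_smul_firstOrder (p10 p11 p21 s t : ℂ) {lam : ℂ} (hlam : lam ≠ 0) :
    BundleIso 1 2 2 (p10 • monA 2 0 1 + p11 • monA 2 1 1 + p21 • monA 2 1 2)
      ((lam * p10) • monA 2 0 1 + (lam * p11) • monA 2 1 1 +
        (lam * p21 + (t * p10 + s * p11)) • monA 2 1 2) := by
  set x : Aq 2 := s • monA 2 0 1 + t • monA 2 1 1 with hx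
  have hnil : IsNilpotent x := (Commute.all _ _).isNilpotent_add
    ((isNilpotent_monA one_pos 0).smul s) ((isNilpotent_monA one_pos 1).smul t)
  have hmon (c : ℂ) {S : AddSubmonoid (ℤ × ℕ)} {l : ℤ} {i : ℕ} (h : (l, i) ∈ S) :
      c • monA 2 l i ∈ monSubalgebra 2 S :=
    Subalgebra.smul_mem _ (monA_mem_monSubalgebra h) c
  have hxU : x ∈ monSubalgebra 2 exponentsU :=
    add_mem (hmon s (by simp [mem_exponentsU])) (hmon t (by simp [mem_exponentsU]))
  have hxV : x ∈ monSubalgebra 2 (exponentsV 1) :=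
    add_mem (hmon s (by simp [mem_exponentsV])) (hmon t (by simp [mem_exponentsV]))
  refine BundleIso.of_upperTriangular (a := algebraMap ℂ (Aq 2) lam + x)
    (b := (t * p11) • monA 2 0 2) (c := (-(s * p10)) • monA 2 2 2) ?_ ?_ ?_ ?_ ?_ ?_ ?_
  · exact mem_OU_iff.mpr (add_mem (Subalgebra.algebraMap_mem _ lam) hxU)
  · exact mem_OV_iff.mpr (add_mem (Subalgebra.algebraMap_mem _ lam) hxV)
  · simpa only [mem_OU_iff] using exists_mem_mul_eq_one_of_isNilpotent _ hlam.isUnit hnil hxU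
  · simpa only [mem_OV_iff] using exists_mem_mul_eq_one_of_isNilpotent _ hlam.isUnit hnil hxV
  · exact mem_OU_iff.mpr (hmon _ (by simp [mem_exponentsU]))
  · exact mem_OV_iff.mpr (hmon _ (by simp [mem_exponentsV]))
  · have hcube (l : ℤ) : monA 2 l 3 = 0 := monA_eq_zero_of_lt (by norm_num) l
    simp only [hx, add_mul, mul_add, monA_mul_monA, mul_smul_comm, smul_mul_assoc,
      ← Algebra.smul_def, smul_add, smul_smul, Int.reduceAdd, Int.reduceNeg, Nat.reduceAdd,
      add_zero, zero_add, hcube, smul_zero]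
    module

/-- on `Z_1^{(2)}` (`k = 1`, `j = 2`, `n = 2`), for
`p = (p₁₀ + p₁₁ z)u + p₂₁ z u²` and `p′ = (p′₁₀ + p′₁₁ z)u + p′₂₁ z u²` with
`(p₁₀, p₁₁) ≠ (0,0)`: `E_p ≅ E_{p′}` iff there is `λ ≠ 0` with `p′₁₀ = λ p₁₀` and
`p′₁₁ = λ p₁₁` (with no condition relating `p₂₁` and `p′₂₁`). -/
theorem statement12 (p10 p11 p21 q10 q11 q21 : ℂ) (hne : ¬(p10 = 0 ∧ p11 = 0)) :
    BundleIso 1 2 2 (p10 • monA 2 0 1 + p11 • monA 2 1 1 + p21 • monA 2 1 2)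
      (q10 • monA 2 0 1 + q11 • monA 2 1 1 + q21 • monA 2 1 2) ↔
    ∃ lam : ℂ, lam ≠ 0 ∧ q10 = lam * p10 ∧ q11 = lam * p11 := by
  constructor
  · intro h
    obtain ⟨lam, hlam, hcoeff⟩ := h.exists_coeff_uCoeff_one_eq_mul (by norm_num) (by norm_num)
      (by simp [uCoeff_monA]) (by simp [uCoeff_monA])
    refine ⟨lam, hlam, ?_, ?_⟩
    · simpa [uCoeff_monA, -LaurentPolynomial.T_zero] using hcoeff 0 (by norm_num) (by norm_num)
    · simpa [uCoeff_monA, -LaurentPolynomial.T_zero] using hcoeff 1 (by norm_num) (by norm_num)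
  · rintro ⟨lam, hlam, rfl, rfl⟩
    obtain ⟨s, t, hst⟩ : ∃ s t : ℂ, t * p10 + s * p11 = q21 - lam * p21 := by
      rcases not_and_or.mp hne with h10 | h11
      · exact ⟨0, (q21 - lam * p21) / p10, by field_simp; ring⟩
      · exact ⟨(q21 - lam * p21) / p11, 0, by field_simp; ring⟩
    simpa [hst] using bundleIso_smul_firstOrder p10 p11 p21 s t hlam
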